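/- arXiv:1512.05752 — 2 statements merged into one kernel-verified Lean document; each statement's English description precedes it below -/
import Mathlib

section
/- Let L be a finite-dimensional Leibniz algebra over a field F and let S be a subalgebra of L containing the Frattini ideal φ(L). Then nil(S/φ(L)) = nil(S)/φ(L), where nil(S) is the largest ideal of S that is nil on L and nil(S/φ(L)) is the largest ideal of S/φ(L) that is nil on L/φ(L). -/
/-!
Basic theory of (left) Leibniz algebras, formalized over an arbitrary field `F`.
A Leibniz algebra structure on an `F`-vector space `L` is given by a bilinear
multiplication `m : L →ₗ[F] L →ₗ[F] L` satisfying the left Leibniz identity.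
-/

open Submodule Module

section LeibnizDefs

variable {F : Type*} [Field F] {L : Type*} [AddCommGroup L] [Module F L]
variable (m : L →ₗ[F] L →ₗ[F] L)

/-- The left Leibniz identity: `a(bc) = (ab)c + b(ac)`. -/
def IsLeibniz : Prop :=
  ∀ a b c : L, m a (m b c) = m (m a b) c + m b (m a c)

/-- The multiplication is antisymmetric, i.e. the algebra is a Lie algebra. -/
def IsLie : Prop := ∀ a b : L, m a b = - m b a

/-- The product of two subspaces: the span of all products `x·y`, `x ∈ P`, `y ∈ Q`. -/
abbrev mprod (P Q : Submodule F L) : Submodule F L := Submodule.map₂ m P Q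

/-- A subalgebra: a subspace closed under multiplication. -/
def IsSubalg (S : Submodule F L) : Prop := ∀ x ∈ S, ∀ y ∈ S, m x y ∈ S

/-- An ideal of `L`: a subspace `I` with `L·I ⊆ I` and `I·L ⊆ I`. -/
def IsIdeal (I : Submodule F L) : Prop :=
  ∀ (x : L), ∀ y ∈ I, m x y ∈ I ∧ m y x ∈ I

/-- An ideal `I` of a subalgebra `S`. -/
def IsIdealOf (S I : Submodule F L) : Prop :=
  I ≤ S ∧ ∀ x ∈ S, ∀ y ∈ I, m x y ∈ I ∧ m y x ∈ I

/-- A minimal ideal: a nonzero ideal containing no nonzero proper subideal of `L`. -/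
def IsMinIdeal (A : Submodule F L) : Prop :=
  IsIdeal m A ∧ A ≠ ⊥ ∧ ∀ J, IsIdeal m J → J ≤ A → J = ⊥ ∨ J = A

/-- The derived series of a subspace: `S^(0) = S`, `S^(n+1) = S^(n)·S^(n)`. -/
def derSeries (S : Submodule F L) : ℕ → Submodule F L
  | 0 => S
  | n + 1 => mprod m (derSeries S n) (derSeries S n)

/-- A subalgebra is solvable if its derived series reaches `0`. -/
def IsSolvableSub (S : Submodule F L) : Prop := ∃ n, derSeries m S n = ⊥

/-- The Leibniz algebra `L` is solvable. -/
abbrev IsSolvableAlg : Prop := IsSolvableSub m (⊤ : Submodule F L)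

/-- The lower central series of a subspace: `N^1 = N`, `N^(k+1) = N·N^k`. -/
def lcSeries (N : Submodule F L) : ℕ → Submodule F L
  | 0 => N
  | k + 1 => mprod m N (lcSeries N k)

/-- A subalgebra is nilpotent if its lower central series reaches `0`. -/
def IsNilpotentSub (N : Submodule F L) : Prop := ∃ k, lcSeries m N k = ⊥

/-- A subalgebra `S` is strongly solvable if `S² = S·S` is nilpotent. -/
def IsStronglySolvable (S : Submodule F L) : Prop :=
  IsNilpotentSub m (mprod m S S)

/-- A maximal subalgebra: a proper subalgebra not contained in any larger proper
subalgebra. -/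
def IsMaxSubalg (S : Submodule F L) : Prop :=
  IsSubalg m S ∧ S ≠ ⊤ ∧ ∀ T, IsSubalg m T → S ≤ T → T = S ∨ T = ⊤

/-- The Frattini subalgebra `F(L)`: the intersection of all maximal subalgebras. -/
def frattiniSub : Submodule F L := sInf {S | IsMaxSubalg m S}

/-- The Frattini ideal `φ(L)`: the largest ideal contained in the Frattini
subalgebra. -/
def frattiniIdeal : Submodule F L :=
  sSup {I | IsIdeal m I ∧ I ≤ frattiniSub m}

/-- `Leib(L)`: the span of all squares `x·x`. -/
def leibIdeal : Submodule F L := Submodule.span F {z | ∃ x : L, z = m x x}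

/-- The subalgebra generated by a set. -/
def genBy (s : Set L) : Submodule F L := sInf {S | IsSubalg m S ∧ s ⊆ S}

/-- A subalgebra is two-generated if it is generated as an algebra by two elements. -/
def TwoGenerated (S : Submodule F L) : Prop := ∃ x y : L, genBy m {x, y} = S

/-- A subalgebra `S` is supersolvable if there is a chain of ideals of `S`,
`0 = S₀ ⊂ S₁ ⊂ ⋯ ⊂ Sₙ = S`, with `dim Sᵢ = i`. -/
def IsSupersolvable (S : Submodule F L) : Prop :=
  ∃ (n : ℕ) (c : ℕ → Submodule F L), c 0 = ⊥ ∧ c n = S ∧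
    (∀ i, i < n → c i ≤ c (i + 1)) ∧
    (∀ i, i ≤ n → IsIdealOf m S (c i)) ∧
    (∀ i, i ≤ n → Module.finrank F (c i) = i)

/-- A subspace `S` is nil on `L` if left multiplication by each of its elements is a
nilpotent operator. -/
def IsNilOn (S : Submodule F L) : Prop :=
  ∀ x ∈ S, IsNilpotent (m x : Module.End F L)

open scoped TensorProduct in
/-- A subspace `S` is triangulable on `L` if, after extending scalars to the algebraic
closure `K` of `F`, the space `K ⊗ L` admits a basis with respect to which the left
multiplication operators by all elements of `K ⊗ S` are upper triangular matrices.
(Since upper triangular matrices form a `K`-subspace of matrices, it suffices that the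
base-changed left multiplication by each `x ∈ S` is upper triangular.) -/
def IsTriangulableOn (S : Submodule F L) : Prop :=
  ∃ (n : ℕ) (b : Basis (Fin n) (AlgebraicClosure F) ((AlgebraicClosure F) ⊗[F] L)),
    ∀ x ∈ S, ∀ i j : Fin n, j < i →
      LinearMap.toMatrix b b (LinearMap.baseChange (AlgebraicClosure F) (m x)) i j = 0

end LeibnizDefs

/-!
For `x` with `L_xᵏ L ⊆ φ(L)`, Fitting's lemma splits `L` into the null component `L₀` of `L_x` and
the one component `L₁ ⊆ φ(L)`. Since `L_x` is a derivation, `L₀` is a subalgebra; if it were proper,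
a maximal subalgebra containing it would contain `L₀ + φ(L) = L`. Hence `L₀ = L`, that is, `L_x` is
nilpotent. So an ideal is nil on `L` if and only if it is nil modulo `φ(L)`.
-/

/-- `D` is a derivation of the not necessarily associative algebra on `A` with multiplication `m`,
as the left multiplications of a Leibniz algebra are. Mathlib's `Derivation` and `LieDerivation`
require a commutative algebra or a Lie algebra. -/
def IsDerivation {R A : Type*} [CommSemiring R] [AddCommMonoid A] [Module R A]
    (m : A →ₗ[R] A →ₗ[R] A) (D : Module.End R A) : Prop :=
  ∀ a b : A, D (m a b) = m (D a) b + m a (D b)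

open Finset in
theorem IsDerivation.pow_apply_mul {R A : Type*} [CommSemiring R] [AddCommMonoid A] [Module R A]
    {m : A →ₗ[R] A →ₗ[R] A} {D : Module.End R A} (hD : IsDerivation m D) (n : ℕ) (a b : A) :
    (D ^ n) (m a b) =
      ∑ ij ∈ antidiagonal n, n.choose ij.1 • m ((D ^ ij.1) a) ((D ^ ij.2) b) := by
  induction n with
  | zero => simp
  | succ n ih =>
    rw [sum_antidiagonal_choose_succ_nsmul (fun i j => m ((D ^ i) a) ((D ^ j) b)) n]
    simp only [pow_succ', Module.End.mul_apply, ih, map_sum, map_nsmul, hD _ _, smul_add,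
      sum_add_distrib]
    rw [add_comm]
    congr 1
    refine sum_congr rfl fun ⟨i, j⟩ hij => ?_
    rw [n.choose_symm_of_eq_add (mem_antidiagonal.1 hij).symm]

section

variable {F : Type*} [Field F] {L : Type*} [AddCommGroup L] [Module F L]
variable {m : L →ₗ[F] L →ₗ[F] L}

theorem IsLeibniz.isDerivation (hm : IsLeibniz m) (x : L) : IsDerivation m (m x) :=
  hm x

theorem IsDerivation.isSubalg_maxGenEigenspace_zero {D : Module.End F L}
    (hD : IsDerivation m D) : IsSubalg m (D.maxGenEigenspace 0) := by
  intro a ha b hb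
  simp only [Module.End.mem_maxGenEigenspace, zero_smul, sub_zero] at ha hb ⊢
  obtain ⟨i, hi⟩ := ha
  obtain ⟨j, hj⟩ := hb
  refine ⟨i + j, ?_⟩
  rw [hD.pow_apply_mul]
  refine Finset.sum_eq_zero fun ⟨p, q⟩ hpq => ?_
  have hpq : p + q = i + j := Finset.HasAntidiagonal.mem_antidiagonal.1 hpq
  obtain hp | hq : i ≤ p ∨ j ≤ q := by lia
  · simp [Module.End.pow_map_zero_of_le hp hi]
  · simp [Module.End.pow_map_zero_of_le hq hj]

theorem exists_isMaxSubalg_ge [FiniteDimensional F L] {T : Submodule F L} (hT : IsSubalg m T)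
    (hT_ne : T ≠ ⊤) : ∃ M, IsMaxSubalg m M ∧ T ≤ M := by
  obtain ⟨M, hTM, hM⟩ := exists_maximal_ge_of_wellFoundedGT
    (fun U : Submodule F L => IsSubalg m U ∧ U ≠ ⊤) T ⟨hT, hT_ne⟩
  refine ⟨M, ⟨hM.prop.1, hM.prop.2, fun U hU hMU => ?_⟩, hTM⟩
  by_cases hU_ne : U = ⊤
  · exact Or.inr hU_ne
  · exact Or.inl (hM.eq_of_le ⟨hU, hU_ne⟩ hMU).symm

theorem IsSubalg.eq_top_of_sup_frattiniSub_eq_top [FiniteDimensional F L] {T : Submodule F L}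
    (hT : IsSubalg m T) (h : T ⊔ frattiniSub m = ⊤) : T = ⊤ := by
  by_contra hT_ne
  obtain ⟨M, hM, hTM⟩ := exists_isMaxSubalg_ge hT hT_ne
  have hφM : frattiniSub m ≤ M := sInf_le hM
  exact hM.2.1 (top_le_iff.1 (h ▸ sup_le hTM hφM))

variable (m) in
theorem frattiniIdeal_le_frattiniSub : frattiniIdeal m ≤ frattiniSub m :=
  sSup_le fun _ hI => hI.2

theorem IsDerivation.isNilpotent_of_range_pow_le_frattiniSub [FiniteDimensional F L]
    {D : Module.End F L} (hD : IsDerivation m D) {k : ℕ}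
    (hk : LinearMap.range (D ^ k) ≤ frattiniSub m) : IsNilpotent D := by
  have fitting : D.maxGenEigenspace 0 ⊔ ⨅ n, LinearMap.range (D ^ n) = ⊤ := by
    simpa [Module.End.maxGenEigenspace, Module.End.genEigenspace_top,
      Module.End.genEigenspace_nat] using D.isCompl_iSup_ker_pow_iInf_range_pow.sup_eq_top
  have null_eq_top : D.maxGenEigenspace 0 = ⊤ := by
    refine hD.isSubalg_maxGenEigenspace_zero.eq_top_of_sup_frattiniSub_eq_top ?_
    exact top_le_iff.1 (fitting ▸ sup_le_sup_left ((iInf_le _ k).trans hk) _)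
  refine Module.End.isNilpotent_iff_of_finite.2 fun y => ?_
  have hy : y ∈ D.maxGenEigenspace 0 := null_eq_top ▸ Submodule.mem_top
  simpa only [Module.End.mem_maxGenEigenspace, zero_smul, sub_zero] using hy

theorem IsLeibniz.isNilpotent_iff_exists_pow_mem_frattiniIdeal [FiniteDimensional F L]
    (hm : IsLeibniz m) (x : L) :
    IsNilpotent (m x : Module.End F L) ↔
      ∃ k : ℕ, ∀ y : L, ((m x : Module.End F L) ^ k) y ∈ frattiniIdeal m := by
  constructor
  · rintro ⟨k, hk⟩
    exact ⟨k, fun y => by simp [hk]⟩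
  · rintro ⟨k, hk⟩
    refine (hm.isDerivation x).isNilpotent_of_range_pow_le_frattiniSub (k := k) ?_
    rintro _ ⟨y, rfl⟩
    exact frattiniIdeal_le_frattiniSub m (hk y)

end

/-- Let `L` be a finite-dimensional Leibniz algebra and `S` a
subalgebra of `L` containing the Frattini ideal `φ(L)`. Then
`nil(S/φ(L)) = nil(S)/φ(L)`. Here `nil(S)` is the largest ideal `N` of `S` that is nil
on `L`, and `nil(S/φ(L))` is the largest ideal of `S/φ(L)` that is nil on `L/φ(L)`;
the latter is identified with its full preimage `J` in `L`, namely the largest ideal `J`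
of `S` with `φ(L) ≤ J` such that left multiplication by each `x ∈ J` is nilpotent modulo
`φ(L)`. The desired equality `nil(S/φ(L)) = nil(S)/φ(L)` then reads `J = N ⊔ φ(L)`. -/
theorem nil_of_quotient_by_frattini
    {F : Type*} [Field F] {L : Type*} [AddCommGroup L] [Module F L]
    [FiniteDimensional F L]
    (m : L →ₗ[F] L →ₗ[F] L) (hm : IsLeibniz m)
    (S : Submodule F L) (hS : IsSubalg m S)
    (hphiS : frattiniIdeal m ≤ S)
    (N : Submodule F L)
    (hN : IsGreatest {I : Submodule F L | IsIdealOf m S I ∧ IsNilOn m I} N)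
    (J : Submodule F L)
    (hJ : IsGreatest {J' : Submodule F L | IsIdealOf m S J' ∧ frattiniIdeal m ≤ J' ∧
      ∀ x ∈ J', ∃ k : ℕ, ∀ y : L, ((m x : Module.End F L) ^ k) y ∈ frattiniIdeal m} J) :
    J = N ⊔ frattiniIdeal m := by
  simp only [← hm.isNilpotent_iff_exists_pow_mem_frattiniIdeal] at hJ
  obtain ⟨⟨hN_ideal, hN_nil⟩, hN_max⟩ := hN
  obtain ⟨⟨hJ_ideal, hφJ, hJ_nil⟩, hJ_max⟩ := hJ
  have hJN : J ≤ N := hN_max ⟨hJ_ideal, hJ_nil⟩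
  have hNJ : N ≤ J := hJ_max ⟨hN_ideal, hφJ.trans hJN, hN_nil⟩
  exact le_antisymm (hJN.trans le_sup_left) (sup_le hNJ hφJ)
end

section
/- Let L be a finite-dimensional solvable Leibniz algebra over a field F such that each two-generated proper subalgebra of L is triangulable on L. Then L is triangulable on itself. -/
/-!
Basic theory of (left) Leibniz algebras, formalized over an arbitrary field `F`.
A Leibniz algebra structure on an `F`-vector space `L` is given by a bilinear
multiplication `m : L →ₗ[F] L →ₗ[F] L` satisfying the left Leibniz identity.
-/

open Submodule Module

/-!
Left multiplications satisfy `m (x·y) = [m x, m y]`, so they form a solvable Lie algebra acting on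
`L`, and products within a subalgebra triangulable on `L` act nilpotently. The main step is that
every element of `L²` acts nilpotently. Suppose `z ∈ L²` does not. Its Fitting null component `E` is
then a proper subalgebra, so the product of any two elements of `E` acts nilpotently, by hypothesis
applied to the subalgebra they generate. If `L²` acts nilpotently modulo `L⁽ᵏ⁾`, then
`L = E + L⁽ᵏ⁾`, and every product `x·y` differs by an element of `L⁽ᵏ⁾` from a product within `E`;
on `L⁽ᵏ⁾` the two act alike modulo `L⁽ᵏ⁺¹⁾`, so `x·y` acts nilpotently modulo `L⁽ᵏ⁺¹⁾`. Since in a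
solvable Lie algebra nilpotent brackets make the whole derived algebra act nilpotently, `L²` acts
nilpotently modulo `L⁽ᵏ⁺¹⁾`, and by induction modulo `0`, a contradiction. Finally, where the
derived algebra acts nilpotently it kills every irreducible quotient; over an algebraically closed
field these are then one-dimensional, in any characteristic.
-/

open LieAlgebra (derivedSeries derivedSeries_def derivedSeriesOfIdeal_succ)
open LieModule (toEnd)

attribute [local instance] LieRing.ofAssociativeRing

section IsNilpotentMod

variable {R M : Type*} [Semiring R] [AddCommMonoid M] [Module R M]

/-- `f` is nilpotent modulo the submodule `N`: some power of `f` maps everything into `N`. -/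
def IsNilpotentMod (f : Module.End R M) (N : Submodule R M) : Prop :=
  ∃ n, ∀ v, (f ^ n) v ∈ N

lemma isNilpotentMod_bot {f : Module.End R M} : IsNilpotentMod f ⊥ ↔ IsNilpotent f := by
  simp only [IsNilpotentMod, Submodule.mem_bot, IsNilpotent, LinearMap.ext_iff,
    LinearMap.zero_apply]

lemma isNilpotentMod_of_isNilpotent {f : Module.End R M} (hf : IsNilpotent f)
    (N : Submodule R M) : IsNilpotentMod f N := by
  obtain ⟨n, hn⟩ := hf
  exact ⟨n, fun v => by simp [hn]⟩

end IsNilpotentMod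

lemma IsNilpotentMod.of_isNilpotent_of_sub_mem {R M : Type*} [Ring R] [AddCommGroup M]
    [Module R M] {f h : Module.End R M} {C C' : Submodule R M}
    (hf : IsNilpotentMod f C) (hh : IsNilpotent h) (hC : ∀ v ∈ C, h v ∈ C)
    (hC' : ∀ v ∈ C', f v ∈ C') (hsub : ∀ v ∈ C, f v - h v ∈ C') : IsNilpotentMod f C' := by
  obtain ⟨n, hn⟩ := hf
  obtain ⟨l, hl⟩ := hh
  have hpow : ∀ i, ∀ v ∈ C, (h ^ i) v ∈ C ∧ (f ^ i) v - (h ^ i) v ∈ C' := fun i v hv => by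
    induction i with
    | zero => simpa using hv
    | succ i ih =>
      simp only [pow_succ', Module.End.mul_apply]
      refine ⟨hC _ ih.1, ?_⟩
      have := add_mem (hC' _ ih.2) (hsub _ ih.1)
      rwa [map_sub, sub_add_sub_cancel] at this
  refine ⟨l + n, fun v => ?_⟩
  have := (hpow l _ (hn v)).2
  rwa [hl, LinearMap.zero_apply, sub_zero, ← Module.End.mul_apply, ← pow_add] at this

lemma IsNilpotentMod.maxGenEigenspace_sup_eq_top {R M : Type*} [CommRing R]
    [AddCommGroup M] [Module R M] [IsNoetherian R M] [IsArtinian R M] {f : Module.End R M}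
    {N : Submodule R M} (hf : IsNilpotentMod f N) :
    f.maxGenEigenspace 0 ⊔ N = ⊤ := by
  obtain ⟨n, hn⟩ := hf
  have hker : ⨆ i, LinearMap.ker (f ^ i) = f.maxGenEigenspace 0 := by
    simp [← Module.End.iSup_genEigenspace_eq, Module.End.genEigenspace_nat]
  have hrange : ⨅ i, LinearMap.range (f ^ i) ≤ N :=
    (iInf_le _ n).trans (LinearMap.range_le_iff_comap.2 (eq_top_iff.2 fun v _ => hn v))
  refine eq_top_iff.2 (le_trans ?_ (sup_le_sup_left hrange _))
  rw [← hker, (LinearMap.isCompl_iSup_ker_pow_iInf_range_pow f).sup_eq_top]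

section UpperTriangular

lemma isNilpotent_of_isUpperTriangular_of_diag_eq_zero {R n : Type*} [CommRing R] [Fintype n]
    [LinearOrder n] {A : Matrix n n R} (hA : A.IsUpperTriangular) (hdiag : ∀ i, A i i = 0) :
    IsNilpotent A := by
  have hchar : A.charpoly = Polynomial.X ^ Fintype.card n := by
    rw [Matrix.charpoly_of_isUpperTriangular A hA]
    simp [hdiag]
  exact ⟨Fintype.card n, by simpa [hchar] using Matrix.aeval_self_charpoly A⟩

lemma mul_apply_self_of_isUpperTriangular {R n : Type*} [NonUnitalNonAssocSemiring R] [Fintype n]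
    [LinearOrder n] {A B : Matrix n n R} (hA : A.IsUpperTriangular) (hB : B.IsUpperTriangular)
    (i : n) : (A * B) i i = A i i * B i i := by
  rw [Matrix.mul_apply]
  refine Finset.sum_eq_single i (fun j _ hj => ?_) (by simp)
  rcases hj.lt_or_gt with hlt | hgt
  · rw [hA hlt, zero_mul]
  · rw [hB hgt, mul_zero]

lemma isNilpotent_lie_of_isUpperTriangular {R n : Type*} [CommRing R] [Fintype n]
    [LinearOrder n] {A B : Matrix n n R} (hA : A.IsUpperTriangular) (hB : B.IsUpperTriangular) :
    IsNilpotent ⁅A, B⁆ := by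
  rw [Ring.lie_def]
  refine isNilpotent_of_isUpperTriangular_of_diag_eq_zero ((hA.mul hB).sub (hB.mul hA)) fun i => ?_
  rw [Matrix.sub_apply, mul_apply_self_of_isUpperTriangular hA hB,
    mul_apply_self_of_isUpperTriangular hB hA, mul_comm, sub_self]

variable {R M : Type*} [CommRing R] [AddCommGroup M] [Module R M]

lemma isUpperTriangular_toMatrix_iff {n : ℕ} (b : Basis (Fin n) R M) (f : Module.End R M) :
    (LinearMap.toMatrix b b f).IsUpperTriangular ↔
      ∀ j, f (b j) ∈ Submodule.span R (b '' Set.Iic j) := by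
  have hcol : ∀ j, f (b j) ∈ Submodule.span R (b '' Set.Iic j) ↔
      ∀ i, j < i → LinearMap.toMatrix b b f i j = 0 := fun j => by
    simp only [Basis.mem_span_image, Set.subset_def, Finset.mem_coe,
      Finsupp.mem_support_iff, Set.mem_Iic, LinearMap.toMatrix_apply, not_imp_comm, not_le]
  simp only [hcol]
  exact forall_comm

lemma isUpperTriangular_toMatrix_mkFinSnoc [IsDomain R] {n : ℕ} {N : Submodule R M}
    (b : Basis (Fin n) R N) (y : M) (hli : ∀ c : R, ∀ x ∈ N, c • y + x = 0 → c = 0)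
    (hsp : ∀ z : M, ∃ c : R, z + c • y ∈ N) {f : Module.End R M} (hf : ∀ v ∈ N, f v ∈ N)
    (hb : (LinearMap.toMatrix b b (f.restrict hf)).IsUpperTriangular) :
    (LinearMap.toMatrix (Basis.mkFinSnoc b y hli hsp)
      (Basis.mkFinSnoc b y hli hsp) f).IsUpperTriangular := by
  rw [isUpperTriangular_toMatrix_iff] at hb ⊢
  intro j
  induction j using Fin.lastCases with
  | last =>
    have huniv : Set.Iic (Fin.last n) = Set.univ := Set.eq_univ_of_forall Fin.le_last
    rw [huniv, Set.image_univ, Basis.span_eq]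
    exact Submodule.mem_top
  | cast j =>
    have hmap := Submodule.mem_map_of_mem (f := N.subtype) (hb j)
    rw [Submodule.map_span, ← Set.image_comp] at hmap
    rw [Basis.coe_mkFinSnoc, Fin.snoc_castSucc]
    refine Submodule.span_mono ?_ hmap
    rintro _ ⟨i, hi, rfl⟩
    exact ⟨i.castSucc, Fin.castSucc_le_castSucc_iff.2 hi, by simp⟩

lemma exists_basis_isUpperTriangular_of_finrank_quotient_eq_one {k V : Type*} [Field k]
    [AddCommGroup V] [Module k V] {n : ℕ} {N : Submodule k V} (hN : finrank k (V ⧸ N) = 1)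
    (b : Basis (Fin n) k N) :
    ∃ b' : Basis (Fin (n + 1)) k V, ∀ (f : Module.End k V) (hf : ∀ v ∈ N, f v ∈ N),
      (LinearMap.toMatrix b b (f.restrict hf)).IsUpperTriangular →
        (LinearMap.toMatrix b' b' f).IsUpperTriangular := by
  obtain ⟨q, hq, hspan⟩ := finrank_eq_one_iff'.1 hN
  obtain ⟨y, rfl⟩ := N.mkQ_surjective q
  have hy : y ∉ N := fun h => hq ((Submodule.Quotient.mk_eq_zero N).2 h)
  have hli : ∀ c : k, ∀ x ∈ N, c • y + x = 0 → c = 0 := fun c x hx hcx => by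
    by_contra hc
    exact hy ((N.smul_mem_iff hc).1 (eq_neg_of_add_eq_zero_left hcx ▸ neg_mem hx))
  have hsp : ∀ z : V, ∃ c : k, z + c • y ∈ N := fun z => by
    obtain ⟨c, hc⟩ := hspan (N.mkQ z)
    refine ⟨-c, (Submodule.Quotient.mk_eq_zero N).1 ?_⟩
    rw [← Submodule.mkQ_apply, map_add, map_smul, neg_smul, hc, add_neg_cancel]
  exact ⟨.mkFinSnoc b y hli hsp, fun f hf => isUpperTriangular_toMatrix_mkFinSnoc b y hli hsp hf⟩

end UpperTriangular

section LieModuleCommRing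

variable {R g V : Type*} [CommRing R] [LieRing g] [LieAlgebra R g]
  [AddCommGroup V] [Module R V] [LieRingModule g V] [LieModule R g V]

lemma isIrreducible_quotient_of_isCoatom {N : LieSubmodule R g V} (hN : IsCoatom N) :
    LieModule.IsIrreducible R g (V ⧸ N) := by
  have : Nontrivial (V ⧸ N) := Submodule.Quotient.nontrivial_iff.2 (by simpa using hN.1)
  refine .mk fun P hP => ?_
  have hle : N ≤ P.comap (LieSubmodule.Quotient.mk' N) := fun v hv => by
    rw [LieSubmodule.mem_comap, (LieSubmodule.Quotient.mk_eq_zero (N := N)).2 hv]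
    exact P.zero_mem
  have hsurj := LieSubmodule.Quotient.surjective_mk' N
  rcases hN.le_iff.1 hle with h | h
  · refine eq_top_iff.2 fun q _ => ?_
    obtain ⟨v, rfl⟩ := hsurj q
    exact (h ▸ LieSubmodule.mem_top v : v ∈ P.comap (LieSubmodule.Quotient.mk' N))
  · refine absurd (eq_bot_iff.2 fun q hq => ?_) hP
    obtain ⟨v, rfl⟩ := hsurj q
    exact (LieSubmodule.Quotient.mk_eq_zero (N := N)).2 (h ▸ hq : v ∈ N)

lemma isNilpotent_toEnd_quotient_iff {N : LieSubmodule R g V} {x : g} :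
    IsNilpotent (toEnd R g (V ⧸ N) x) ↔ IsNilpotentMod (toEnd R g V x) N.toSubmodule := by
  have hpow : ∀ n v, (toEnd R g (V ⧸ N) x ^ n) (LieSubmodule.Quotient.mk' N v) =
      LieSubmodule.Quotient.mk' N ((toEnd R g V x ^ n) v) := fun n =>
    LinearMap.congr_fun (Module.End.commute_pow_left_of_commute
      (LieSubmodule.Quotient.toEnd_comp_mk' N x) n)
  refine exists_congr fun n => ?_
  simp only [LinearMap.ext_iff, (LieSubmodule.Quotient.surjective_mk' N).forall, hpow]
  exact forall_congr' fun v => LieSubmodule.Quotient.mk_eq_zero N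

lemma isNilpotent_toEnd_lieSubmodule (N : LieSubmodule R g V) {x : g}
    (hx : IsNilpotent (toEnd R g V x)) : IsNilpotent (toEnd R g N x) := by
  obtain ⟨n, hn⟩ := hx
  refine ⟨n, LinearMap.ext fun w => Subtype.ext ?_⟩
  rw [LieSubmodule.coe_toEnd_pow, hn]
  rfl

lemma lie_top_quotient_eq_bot_iff {N : LieSubmodule R g V} {I : LieIdeal R g} :
    ⁅I, (⊤ : LieSubmodule R g (V ⧸ N))⁆ = ⊥ ↔ ∀ u ∈ I, ∀ v : V, ⁅u, v⁆ ∈ N := by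
  simp only [LieSubmodule.lie_eq_bot_iff, LieSubmodule.mem_top, true_imp_iff,
    (LieSubmodule.Quotient.surjective_mk' N).forall, ← LieModuleHom.map_lie,
    LieSubmodule.Quotient.mk_eq_zero]

lemma isNilpotent_iff_exists_lcs_eq_bot (I : LieIdeal R g) :
    LieModule.IsNilpotent I V ↔ ∃ n, I.lcs V n = ⊥ := by
  simp only [LieModule.isNilpotent_iff R I V, ← LieSubmodule.toSubmodule_eq_bot,
    LieIdeal.coe_lcs_eq]

lemma lie_top_eq_bot_of_isIrreducible [LieModule.IsIrreducible R g V] (I : LieIdeal R g)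
    [LieModule.IsNilpotent I V] : ⁅I, (⊤ : LieSubmodule R g V)⁆ = ⊥ := by
  refine (eq_bot_or_eq_top _).resolve_right fun htop => ?_
  have hlcs : ∀ n, I.lcs V n = ⊤ := fun n => by
    induction n with
    | zero => rfl
    | succ n ih => rw [LieIdeal.lcs_succ, ih, htop]
  obtain ⟨n, hn⟩ := (isNilpotent_iff_exists_lcs_eq_bot I).1 ‹LieModule.IsNilpotent I V›
  have := LieModule.nontrivial_of_isIrreducible R g V
  exact top_ne_bot ((hlcs n).symm.trans hn)

lemma isNilpotent_toEnd_of_mem_lie_self (I : LieIdeal R g)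
    (hcomm : ⁅⁅⁅I, I⁆, ⁅I, I⁆⁆, (⊤ : LieSubmodule R g V)⁆ = ⊥)
    (hnil : ∀ x ∈ I, ∀ y ∈ I, IsNilpotent (toEnd R g V ⁅x, y⁆))
    {u : g} (hu : u ∈ ⁅I, I⁆) : IsNilpotent (toEnd R g V u) := by
  have hcommute : ∀ u ∈ ⁅I, I⁆, ∀ w ∈ ⁅I, I⁆,
      Commute (toEnd R g V u) (toEnd R g V w) := fun u hu w hw => by
    rw [commute_iff_lie_eq, ← LieHom.map_lie]
    exact LinearMap.ext fun v => (LieSubmodule.lie_eq_bot_iff _ _).1 hcomm _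
      (LieSubmodule.lie_mem_lie hu hw) v (LieSubmodule.mem_top v)
  have hspan : (⁅I, I⁆ : LieIdeal R g).toSubmodule =
      Submodule.span R {z | ∃ x ∈ I, ∃ y ∈ I, ⁅x, y⁆ = z} :=
    LieSubmodule.lieIdeal_oper_eq_linear_span' I I
  have hmem : ∀ z, z ∈ Submodule.span R {z | ∃ x ∈ I, ∃ y ∈ I, ⁅x, y⁆ = z} ↔ z ∈ ⁅I, I⁆ := by
    simp [← hspan]
  rw [← hmem] at hu
  induction hu using Submodule.span_induction with
  | mem z hz => obtain ⟨x, hx, y, hy, rfl⟩ := hz; exact hnil x hx y hy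
  | zero => simp
  | add u w hu hw ihu ihw =>
    rw [map_add]
    exact (hcommute u ((hmem u).1 hu) w ((hmem w).1 hw)).isNilpotent_add ihu ihw
  | smul c u _ ih => rw [map_smul]; exact ih.smul c

lemma lie_mem_derivedSeries_one (x y : g) : ⁅x, y⁆ ∈ derivedSeries R g 1 :=
  LieSubmodule.lie_mem_lie (LieSubmodule.mem_top x) (LieSubmodule.mem_top y)

lemma baseChange_lcs (A : Type*) [CommRing A] [Algebra R A] (I : LieIdeal R g) (n : ℕ) :
    LieIdeal.lcs (I.baseChange A) (TensorProduct R A V) n = (I.lcs V n).baseChange A := by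
  induction n with
  | zero => simp
  | succ n ih => rw [LieIdeal.lcs_succ, LieIdeal.lcs_succ, ih, LieSubmodule.lie_baseChange]

lemma isNilpotent_derivedSeries_baseChange (A : Type*) [CommRing A] [Algebra R A] (i : ℕ)
    [LieModule.IsNilpotent (derivedSeries R g i) V] :
    LieModule.IsNilpotent (derivedSeries A (TensorProduct R A g) i) (TensorProduct R A V) := by
  obtain ⟨n, hn⟩ := (isNilpotent_iff_exists_lcs_eq_bot _).1
    ‹LieModule.IsNilpotent (derivedSeries R g i) V›
  rw [LieAlgebra.derivedSeries_baseChange, isNilpotent_iff_exists_lcs_eq_bot]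
  exact ⟨n, by rw [baseChange_lcs, hn, LieSubmodule.baseChange_bot]⟩

end LieModuleCommRing

section LieModuleField

variable {k g V : Type*} [Field k] [LieRing g] [AddCommGroup V] [Module k V]
  [LieRingModule g V] [FiniteDimensional k V]

lemma finrank_lt_of_isCoatom {N : LieSubmodule k g V} (hN : IsCoatom N) :
    finrank k N < finrank k V :=
  Submodule.finrank_lt (s := N.toSubmodule) (by simpa using hN.1)

variable [LieAlgebra k g] [LieModule k g V]

lemma isNilpotent_of_forall_isNilpotent_toEnd (I : LieIdeal k g)
    (h : ∀ u ∈ I, IsNilpotent (toEnd k g V u)) : LieModule.IsNilpotent I V :=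
  (LieModule.isNilpotent_iff_forall' (R := k)).2 fun u => h u u.2

lemma derivedSeries_one_lie_eq_bot_of_isIrreducible [LieAlgebra.IsSolvable g]
    [LieModule.IsIrreducible k g V]
    (hnil : ∀ x y : g, IsNilpotent (toEnd k g V ⁅x, y⁆)) :
    ⁅derivedSeries k g 1, (⊤ : LieSubmodule k g V)⁆ = ⊥ := by
  -- Brackets of elements of the `i`-th term act as commuting nilpotent operators once the
  -- `(i + 2)`-nd term kills `V`, so the `(i + 1)`-st term acts nilpotently and kills `V` too.
  have hstep : ∀ i, ⁅derivedSeries k g (i + 2), (⊤ : LieSubmodule k g V)⁆ = ⊥ →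
      ⁅derivedSeries k g (i + 1), (⊤ : LieSubmodule k g V)⁆ = ⊥ := fun i hi => by
    rw [derivedSeries_def, derivedSeriesOfIdeal_succ] at hi ⊢
    rw [derivedSeriesOfIdeal_succ] at hi
    have := isNilpotent_of_forall_isNilpotent_toEnd _ fun u hu =>
      isNilpotent_toEnd_of_mem_lie_self (V := V) _ hi (fun x _ y _ => hnil x y) hu
    exact lie_top_eq_bot_of_isIrreducible _
  obtain ⟨n, hn⟩ := LieAlgebra.IsSolvable.solvable k g
  have hbase : ⁅derivedSeries k g (n + 1), (⊤ : LieSubmodule k g V)⁆ = ⊥ := by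
    rw [derivedSeries_def, derivedSeriesOfIdeal_succ, ← derivedSeries_def, hn]
    simp
  clear hn
  induction n with
  | zero => exact hbase
  | succ n ih => exact ih (hstep n hbase)

lemma isNilpotent_toEnd_of_mem_derivedSeries_one [LieAlgebra.IsSolvable g]
    (hnil : ∀ x y : g, IsNilpotent (toEnd k g V ⁅x, y⁆)) {u : g} (hu : u ∈ derivedSeries k g 1) :
    IsNilpotent (toEnd k g V u) := by
  induction hd : finrank k V using Nat.strong_induction_on generalizing V with
  | _ d ih =>
    subst hd
    rcases subsingleton_or_nontrivial V with _ | _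
    · exact ⟨1, Subsingleton.elim _ _⟩
    obtain ⟨M, hM⟩ := IsCoatomic.exists_coatom (LieSubmodule k g V)
    have hVM : ∀ v : V, ⁅u, v⁆ ∈ M := by
      have := isIrreducible_quotient_of_isCoatom hM
      exact lie_top_quotient_eq_bot_iff.1 (derivedSeries_one_lie_eq_bot_of_isIrreducible
        fun x y => isNilpotent_toEnd_quotient_iff.2
          (isNilpotentMod_of_isNilpotent (hnil x y) _)) u hu
    obtain ⟨n, hn⟩ : IsNilpotent (toEnd k g M u) :=
      ih _ (finrank_lt_of_isCoatom hM) (fun x y => isNilpotent_toEnd_lieSubmodule M (hnil x y)) rfl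
    refine ⟨n + 1, LinearMap.ext fun v => ?_⟩
    rw [pow_succ, Module.End.mul_apply, LieModule.toEnd_apply_apply,
      ← LieSubmodule.coe_toEnd_pow (y := ⟨⁅u, v⁆, hVM v⟩), hn]
    rfl

lemma exists_smul_eq_lie_of_isIrreducible [IsAlgClosed k] [LieModule.IsIrreducible k g V]
    (h : ⁅derivedSeries k g 1, (⊤ : LieSubmodule k g V)⁆ = ⊥) (x : g) :
    ∃ c : k, ∀ v : V, ⁅x, v⁆ = c • v := by
  have := LieModule.nontrivial_of_isIrreducible k g V
  obtain ⟨c, hc⟩ := Module.End.exists_eigenvalue (toEnd k g V x)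
  let E : LieSubmodule k g V :=
    { Module.End.eigenspace (toEnd k g V x) c with
      lie_mem {y v} hv := by
        have hxy : ⁅⁅x, y⁆, v⁆ = 0 := (LieSubmodule.lie_eq_bot_iff _ _).1 h _
          (lie_mem_derivedSeries_one x y) v (LieSubmodule.mem_top v)
        have hxv : ⁅x, v⁆ = c • v := Module.End.mem_eigenspace_iff.1 hv
        refine Module.End.mem_eigenspace_iff.2 ?_
        rw [LieModule.toEnd_apply_apply, leibniz_lie, hxy, hxv, zero_add, lie_smul] }
  have hE : E = ⊤ := (eq_bot_or_eq_top E).resolve_left fun hbot =>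
    hc (congrArg LieSubmodule.toSubmodule hbot)
  refine ⟨c, fun v => Module.End.mem_eigenspace_iff.1 (?_ : v ∈ E)⟩
  rw [hE]
  exact LieSubmodule.mem_top v

lemma finrank_eq_one_of_isIrreducible [IsAlgClosed k] [LieModule.IsIrreducible k g V]
    (h : ⁅derivedSeries k g 1, (⊤ : LieSubmodule k g V)⁆ = ⊥) : finrank k V = 1 := by
  have := LieModule.nontrivial_of_isIrreducible k g V
  obtain ⟨v, hv⟩ := exists_ne (0 : V)
  let N : LieSubmodule k g V :=
    { k ∙ v with
      lie_mem {x w} hw := by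
        obtain ⟨c, hc⟩ := exists_smul_eq_lie_of_isIrreducible h x
        rw [hc]
        exact Submodule.smul_mem _ c hw }
  have hN : N = ⊤ := (eq_bot_or_eq_top N).resolve_left fun hbot =>
    hv (Submodule.span_singleton_eq_bot.1 (congrArg LieSubmodule.toSubmodule hbot))
  exact (finrank_eq_one_iff_of_nonzero v hv).2 (congrArg LieSubmodule.toSubmodule hN)

lemma exists_basis_isUpperTriangular_toEnd [IsAlgClosed k]
    (hnil : ∀ u ∈ derivedSeries k g 1, IsNilpotent (toEnd k g V u)) :
    ∃ (n : ℕ) (b : Basis (Fin n) k V),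
      ∀ x : g, (LinearMap.toMatrix b b (toEnd k g V x)).IsUpperTriangular := by
  induction hd : finrank k V using Nat.strong_induction_on generalizing V with
  | _ d ih =>
    subst hd
    rcases subsingleton_or_nontrivial V with _ | _
    · exact ⟨0, Basis.empty V, fun x i => i.elim0⟩
    obtain ⟨M, hM⟩ := IsCoatomic.exists_coatom (LieSubmodule k g V)
    obtain ⟨n, b, hb⟩ := ih _ (finrank_lt_of_isCoatom hM)
      (fun u hu => isNilpotent_toEnd_lieSubmodule M (hnil u hu)) rfl
    have hquot : finrank k (V ⧸ M) = 1 := by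
      have := isIrreducible_quotient_of_isCoatom hM
      have := isNilpotent_of_forall_isNilpotent_toEnd (V := V ⧸ M) _ fun u hu =>
        isNilpotent_toEnd_quotient_iff.2 (isNilpotentMod_of_isNilpotent (hnil u hu) _)
      exact finrank_eq_one_of_isIrreducible
        (lie_top_eq_bot_of_isIrreducible (derivedSeries k g 1))
    obtain ⟨b', hb'⟩ :=
      exists_basis_isUpperTriangular_of_finrank_quotient_eq_one (N := M.toSubmodule) hquot b
    exact ⟨n + 1, b', fun x => hb' _ (fun v hv => M.lie_mem hv) (hb x)⟩

end LieModuleField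

section Leibniz

variable {F : Type*} [Field F] {L : Type*} [AddCommGroup L] [Module F L]
variable {m : L →ₗ[F] L →ₗ[F] L}

lemma isSubalg_genBy (s : Set L) : IsSubalg m (genBy m s) := fun a ha b hb =>
  Submodule.mem_sInf.2 fun S hS =>
    hS.1 a (Submodule.mem_sInf.1 ha S hS) b (Submodule.mem_sInf.1 hb S hS)

lemma subset_genBy (s : Set L) : s ⊆ genBy m s := fun _ hz =>
  Submodule.mem_sInf.2 fun _ hS => hS.2 hz

lemma genBy_le {s : Set L} {S : Submodule F L} (hS : IsSubalg m S) (hs : s ⊆ S) :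
    genBy m s ≤ S :=
  sInf_le ⟨hS, hs⟩

lemma mul_mem_derSeries_succ {S : Submodule F L} {k : ℕ} {x y : L} (hx : x ∈ derSeries m S k)
    (hy : y ∈ derSeries m S k) : m x y ∈ derSeries m S (k + 1) :=
  Submodule.apply_mem_map₂ m hx hy

lemma mul_mem_derSeries_one (x y : L) : m x y ∈ derSeries m ⊤ 1 :=
  mul_mem_derSeries_succ (k := 0) Submodule.mem_top Submodule.mem_top

lemma IsLeibniz.leftMul_mul (hm : IsLeibniz m) (x y : L) :
    (m (m x y) : Module.End F L) = ⁅(m x : Module.End F L), (m y : Module.End F L)⁆ :=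
  LinearMap.ext fun v => by
    rw [Ring.lie_def, LinearMap.sub_apply, Module.End.mul_apply, Module.End.mul_apply, hm x y v,
      add_sub_cancel_right]

lemma isIdeal_top : IsIdeal m (⊤ : Submodule F L) := fun _ _ _ =>
  ⟨Submodule.mem_top, Submodule.mem_top⟩

lemma isIdeal_mprod_self (hm : IsLeibniz m) {I : Submodule F L} (hI : IsIdeal m I) :
    IsIdeal m (mprod m I I) := by
  intro x y hy
  suffices h : mprod m I I ≤ (mprod m I I).comap (m x) ⊓ (mprod m I I).comap (m.flip x) from h hy
  have hmul : ∀ {a b}, a ∈ I → b ∈ I → m a b ∈ mprod m I I := Submodule.apply_mem_map₂ m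
  refine Submodule.map₂_le.2 fun a ha b hb => ⟨?_, ?_⟩
  · rw [SetLike.mem_coe, Submodule.mem_comap, hm]
    exact add_mem (hmul (hI x a ha).1 hb) (hmul ha (hI x b hb).1)
  · rw [SetLike.mem_coe, Submodule.mem_comap, LinearMap.flip_apply,
      eq_sub_of_add_eq (hm a b x).symm]
    exact sub_mem (hmul ha (hI x b hb).2) (hmul hb (hI x a ha).2)

lemma isIdeal_derSeries (hm : IsLeibniz m) {I : Submodule F L} (hI : IsIdeal m I) (k : ℕ) :
    IsIdeal m (derSeries m I k) := by
  induction k with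
  | zero => exact hI
  | succ k ih => exact isIdeal_mprod_self hm ih

-- `m z` is a derivation of `L`, so this is the product rule for its powers.
lemma leftMul_pow_add_apply_mul_eq_zero (hm : IsLeibniz m) (z : L) {i j : ℕ} {v w : L}
    (hv : ((m z : Module.End F L) ^ i) v = 0) (hw : ((m z : Module.End F L) ^ j) w = 0) :
    ((m z : Module.End F L) ^ (i + j)) (m v w) = 0 := by
  induction hn : i + j generalizing i j v w with
  | zero =>
    obtain ⟨rfl, rfl⟩ := Nat.add_eq_zero_iff.1 hn
    rw [show v = 0 from hv, map_zero, LinearMap.zero_apply, map_zero]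
  | succ n ih =>
    have hleft : ((m z : Module.End F L) ^ n) (m (m z v) w) = 0 := by
      cases i with
      | zero => rw [show v = 0 from hv, map_zero, map_zero, LinearMap.zero_apply, map_zero]
      | succ i => exact ih (by rwa [pow_succ] at hv) hw (by lia)
    have hright : ((m z : Module.End F L) ^ n) (m v (m z w)) = 0 := by
      cases j with
      | zero => rw [show w = 0 from hw, map_zero, map_zero, map_zero]
      | succ j => exact ih hv (by rwa [pow_succ] at hw) (by lia)
    rw [pow_succ, Module.End.mul_apply, hm z v w, map_add, hleft, hright, add_zero]

lemma isSubalg_maxGenEigenspace_zero (hm : IsLeibniz m) (z : L) :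
    IsSubalg m (Module.End.maxGenEigenspace (m z) 0) := by
  intro v hv w hw
  simp only [Module.End.mem_maxGenEigenspace, zero_smul, sub_zero] at hv hw ⊢
  obtain ⟨i, hi⟩ := hv
  obtain ⟨j, hj⟩ := hw
  exact ⟨i + j, leftMul_pow_add_apply_mul_eq_zero hm z hi hj⟩

/-- The Lie algebra of left multiplications of a Leibniz algebra, inside `End L`. -/
def leftMulAlgebra (hm : IsLeibniz m) : LieSubalgebra F (Module.End F L) :=
  { LinearMap.range m with
    lie_mem' := by
      rintro _ _ ⟨x, rfl⟩ ⟨y, rfl⟩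
      exact ⟨m x y, hm.leftMul_mul x y⟩ }

/-- Left multiplication as a linear map onto the Lie algebra `leftMulAlgebra hm`. -/
def toLeftMul (hm : IsLeibniz m) : L →ₗ[F] leftMulAlgebra hm :=
  m.rangeRestrict

lemma toLeftMul_mul (hm : IsLeibniz m) (x y : L) :
    toLeftMul hm (m x y) = ⁅toLeftMul hm x, toLeftMul hm y⁆ :=
  Subtype.ext (hm.leftMul_mul x y)

lemma toLeftMul_surjective (hm : IsLeibniz m) : Function.Surjective (toLeftMul hm) :=
  m.surjective_rangeRestrict

lemma derivedSeries_leftMulAlgebra (hm : IsLeibniz m) (k : ℕ) :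
    (derivedSeries F (leftMulAlgebra hm) k).toSubmodule = (derSeries m ⊤ k).map (toLeftMul hm) := by
  induction k with
  | zero =>
    rw [derSeries, Submodule.map_top, LinearMap.range_eq_top.2 (toLeftMul_surjective hm)]
    rfl
  | succ k ih =>
    have hD : ∀ f, f ∈ derivedSeries F (leftMulAlgebra hm) k ↔
        ∃ x ∈ derSeries m ⊤ k, toLeftMul hm x = f := fun f => by
      rw [← LieSubmodule.mem_toSubmodule, ih, Submodule.mem_map]
    rw [derivedSeries_def, derivedSeriesOfIdeal_succ, ← derivedSeries_def,
      LieSubmodule.lieIdeal_oper_eq_linear_span', derSeries, mprod, Submodule.map₂_eq_span_image2,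
      Submodule.map_span]
    congr 1
    ext f
    simp [hD, Set.mem_image2, ← toLeftMul_mul]

lemma isSolvable_leftMulAlgebra (hm : IsLeibniz m) (hsolv : IsSolvableAlg m) :
    LieAlgebra.IsSolvable (leftMulAlgebra hm) := by
  obtain ⟨n, hn⟩ := hsolv
  refine (LieAlgebra.isSolvable_iff F _).2 ⟨n, ?_⟩
  rw [← LieSubmodule.toSubmodule_eq_bot, derivedSeries_leftMulAlgebra, hn, Submodule.map_bot]

lemma toLeftMul_mem_derivedSeries (hm : IsLeibniz m) {k : ℕ} {u : L}
    (hu : u ∈ derSeries m ⊤ k) : toLeftMul hm u ∈ derivedSeries F (leftMulAlgebra hm) k := by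
  rw [← LieSubmodule.mem_toSubmodule, derivedSeries_leftMulAlgebra]
  exact Submodule.mem_map_of_mem hu

lemma isNilpotentMod_of_mem_derSeries_one [FiniteDimensional F L] (hm : IsLeibniz m)
    (hsolv : IsSolvableAlg m) {C : Submodule F L} (hC : ∀ x, ∀ c ∈ C, m x c ∈ C)
    (hnil : ∀ x y, IsNilpotentMod (m (m x y)) C) {u : L} (hu : u ∈ derSeries m ⊤ 1) :
    IsNilpotentMod (m u) C := by
  have := isSolvable_leftMulAlgebra hm hsolv
  let N : LieSubmodule F (leftMulAlgebra hm) L :=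
    { C with
      lie_mem {f c} hc := by
        obtain ⟨x, rfl⟩ := toLeftMul_surjective hm f
        exact hC x c hc }
  refine isNilpotent_toEnd_quotient_iff (N := N) (x := toLeftMul hm u).1
    (isNilpotent_toEnd_of_mem_derivedSeries_one (V := L ⧸ N) (fun f h => ?_)
      (toLeftMul_mem_derivedSeries hm hu))
  obtain ⟨x, rfl⟩ := toLeftMul_surjective hm f
  obtain ⟨y, rfl⟩ := toLeftMul_surjective hm h
  rw [← toLeftMul_mul]
  exact isNilpotent_toEnd_quotient_iff.2 (hnil x y)

lemma isNilpotentMod_derSeries [FiniteDimensional F L] (hm : IsLeibniz m)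
    (hsolv : IsSolvableAlg m) {z : L} (hz : z ∈ derSeries m ⊤ 1)
    (hnil : ∀ x ∈ Module.End.maxGenEigenspace (m z) 0,
      ∀ y ∈ Module.End.maxGenEigenspace (m z) 0, IsNilpotent (m (m x y) : Module.End F L))
    (k : ℕ) {u : L} (hu : u ∈ derSeries m ⊤ 1) : IsNilpotentMod (m u) (derSeries m ⊤ k) := by
  induction k generalizing u with
  | zero => exact ⟨0, fun _ => Submodule.mem_top⟩
  | succ k ih =>
    have hideal := isIdeal_derSeries hm (isIdeal_top (m := m))
    have hdecomp : ∀ x, ∃ x₀ ∈ Module.End.maxGenEigenspace (m z) 0,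
        ∃ c ∈ derSeries m ⊤ k, x₀ + c = x := fun x =>
      Submodule.mem_sup.1 (by
        rw [(ih hz).maxGenEigenspace_sup_eq_top]
        exact Submodule.mem_top)
    refine isNilpotentMod_of_mem_derSeries_one hm hsolv (fun x c hc => (hideal _ x c hc).1)
      (fun x y => ?_) hu
    obtain ⟨x₀, hx₀, c, hc, rfl⟩ := hdecomp x
    obtain ⟨y₀, hy₀, d, hd, rfl⟩ := hdecomp y
    refine (ih (mul_mem_derSeries_one _ _)).of_isNilpotent_of_sub_mem (hnil x₀ hx₀ y₀ hy₀)
      (fun v hv => (hideal k _ v hv).1) (fun v hv => (hideal (k + 1) _ v hv).1) fun v hv => ?_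
    have hdiff : m (x₀ + c) (y₀ + d) - m x₀ y₀ = m c (y₀ + d) + m x₀ d := by
      simp only [map_add, LinearMap.add_apply]
      abel
    rw [← LinearMap.sub_apply, ← map_sub, hdiff]
    exact mul_mem_derSeries_succ (add_mem (hideal k _ c hc).2 (hideal k _ d hd).1) hv

lemma isNilOn_derSeries_one [FiniteDimensional F L] (hm : IsLeibniz m) (hsolv : IsSolvableAlg m)
    (hnil : ∀ E : Submodule F L, IsSubalg m E → E ≠ ⊤ → ∀ x ∈ E, ∀ y ∈ E,
      IsNilpotent (m (m x y) : Module.End F L)) :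
    IsNilOn m (derSeries m ⊤ 1) := fun z hz => by
  by_cases htop : Module.End.maxGenEigenspace (m z) 0 = ⊤
  · refine Module.End.isNilpotent_iff_of_finite.2 fun v => ?_
    have hv : v ∈ Module.End.maxGenEigenspace (m z) 0 := by
      rw [htop]
      exact Submodule.mem_top
    simpa only [Module.End.mem_maxGenEigenspace, zero_smul, sub_zero] using hv
  · obtain ⟨n, hn⟩ := id hsolv
    have := isNilpotentMod_derSeries hm hsolv hz
      (hnil _ (isSubalg_maxGenEigenspace_zero hm z) htop) n hz
    rwa [hn, isNilpotentMod_bot] at this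

lemma isNilpotent_mul_of_isTriangulableOn (hm : IsLeibniz m) {S : Submodule F L}
    (hS : IsTriangulableOn m S) {x y : L} (hx : x ∈ S) (hy : y ∈ S) :
    IsNilpotent (m (m x y) : Module.End F L) := by
  obtain ⟨n, b, hb⟩ := hS
  let K := AlgebraicClosure F
  let φ : Module.End F L →ₐ[F] Matrix (Fin n) (Fin n) K :=
    ((LinearMap.toMatrixAlgEquiv b).toAlgHom.restrictScalars F).comp
      (Module.End.baseChangeHom F K L)
  have hinj : Function.Injective φ :=
    (LinearMap.toMatrixAlgEquiv b).injective.comp (LinearMap.baseChangeHom_injective F L K)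
  have hφ : ∀ x ∈ S, (φ (m x)).IsUpperTriangular := fun x hx i j => hb x hx i j
  rw [← IsNilpotent.map_iff hinj, hm.leftMul_mul, Ring.lie_def, map_sub, map_mul, map_mul,
    ← Ring.lie_def]
  exact isNilpotent_lie_of_isUpperTriangular (hφ x hx) (hφ y hy)

lemma isTriangulableOn_top_of_isNilOn [FiniteDimensional F L] (hm : IsLeibniz m)
    (hnil : IsNilOn m (derSeries m ⊤ 1)) : IsTriangulableOn m (⊤ : Submodule F L) := by
  let K := AlgebraicClosure F
  let g := leftMulAlgebra hm
  have : LieModule.IsNilpotent (derivedSeries F g 1) L := by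
    refine isNilpotent_of_forall_isNilpotent_toEnd _ fun f hf => ?_
    rw [← LieSubmodule.mem_toSubmodule, derivedSeries_leftMulAlgebra] at hf
    obtain ⟨u, hu, rfl⟩ := hf
    exact hnil u hu
  have := isNilpotent_derivedSeries_baseChange (R := F) (g := g) (V := L) K 1
  obtain ⟨n, b, hb⟩ := exists_basis_isUpperTriangular_toEnd (k := K) (g := TensorProduct F K g)
    (V := TensorProduct F K L) fun u hu =>
      LieModule.isNilpotent_toEnd_of_isNilpotent K
        (derivedSeries K (TensorProduct F K g) 1) (TensorProduct F K L) ⟨u, hu⟩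
  refine ⟨n, b, fun x _ i j hij => ?_⟩
  have := hb (1 ⊗ₜ toLeftMul hm x) hij
  rwa [LieModule.toEnd_baseChange] at this

end Leibniz

/-- Let `L` be a finite-dimensional solvable Leibniz algebra such that
each two-generated proper subalgebra of `L` is triangulable on `L`. Then `L` is
triangulable on itself. -/
theorem triangulable_of_two_generated_triangulable
    {F : Type*} [Field F] {L : Type*} [AddCommGroup L] [Module F L]
    [FiniteDimensional F L]
    (m : L →ₗ[F] L →ₗ[F] L) (hm : IsLeibniz m)
    (hsolv : IsSolvableAlg m)
    (h2gen : ∀ S : Submodule F L, IsSubalg m S → S ≠ ⊤ → TwoGenerated m S →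
      IsTriangulableOn m S) :
    IsTriangulableOn m (⊤ : Submodule F L) := by
  refine isTriangulableOn_top_of_isNilOn hm (isNilOn_derSeries_one hm hsolv ?_)
  intro E hE hne x hx y hy
  have hle : genBy m {x, y} ≤ E := genBy_le hE (Set.pair_subset hx hy)
  have htri : IsTriangulableOn m (genBy m {x, y}) :=
    h2gen _ (isSubalg_genBy _) (ne_top_of_le_ne_top hne hle) ⟨x, y, rfl⟩
  exact isNilpotent_mul_of_isTriangulableOn hm htri (subset_genBy _ (by simp))
    (subset_genBy _ (by simp))
end
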